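/- (Return-distribution preservation under isotopic lumping.) In a finite Markov reward process (S, p, μ, r), suppose two distinct states x_i and x_j are isotopic, and let (S', p', μ', r') be the lumped Markov reward process obtained by collapsing x_j into x_i. Then for every horizon N ≥ 1 and every discount factor γ ∈ (0,1), the law of the discounted return Φ_N = Σ_{t=1}^{N} γ^{t−1} r(X_t) of the original chain equals the law of the discounted return Φ'_N = Σ_{t=1}^{N} γ^{t−1} r'(X'_t) of the lumped chain. In particular, E[Φ_N] = E[Φ'_N] and Var(Φ_N) = Var(Φ'_N). -/

import Mathlib

/-!
The collapse map `c` is a strong lumping. The laws `c_* p(xi)` and `c_* p(xj)` agree at every point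
of `S'` other than `xi` by the isotopy hypothesis, hence also at `xi`, since both have total mass
one. Thus `c_* p(x)` depends only on `c x` (`map_collapse_kernel`), and by induction on the horizon
the image of the trajectory law under coordinatewise collapse is the trajectory law of the lumped
chain (`map_collapse_traj`). As `r ∘ c = r`, the two returns are the same function of the original
trajectory, so their laws coincide, and with them mean and variance.
-/

noncomputable section

/-- The joint law `Traj_{n+1}(μ, p)` of the first `n+1` states of a Markov chain with
initial distribution `μ` and transition kernel `p`, defined by iterated `PMF.bind`. -/
def traj {S : Type} (p : S → PMF S) (μ : PMF S) : (n : ℕ) → PMF (Fin (n + 1) → S)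
  | 0 => μ.map fun x => fun _ => x
  | n + 1 => (traj p μ n).bind fun f => (p (f (Fin.last n))).map fun y => Fin.snoc f y

/-- The collapse map into the lumped state space `S' = {s : S // s ≠ xj}`. -/
def collapse {S : Type} (xi xj : S) (hne : xi ≠ xj) [DecidableEq S] (x : S) :
    {s : S // s ≠ xj} :=
  if h : x = xj then ⟨xi, hne⟩ else ⟨x, h⟩

/-- The lumped kernel on `S' = {s : S // s ≠ xj}`. -/
def lumpedKernel {S : Type} [DecidableEq S] (p : S → PMF S) (xi xj : S) (hne : xi ≠ xj) :
    {s : S // s ≠ xj} → PMF {s : S // s ≠ xj} :=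
  fun x => PMF.map (collapse xi xj hne) (p x.val)

/-- The expectation of a real-valued law given as a `PMF`. -/
def pmfMean (q : PMF ℝ) : ℝ := ∑' x : ℝ, (q x).toReal * x

/-- The variance of a real-valued law given as a `PMF`. -/
def pmfVar (q : PMF ℝ) : ℝ := ∑' x : ℝ, (q x).toReal * (x - pmfMean q) ^ 2

theorem pmf_eq_of_eq_off_point {α : Type} (q q' : PMF α) (a : α)
    (h : ∀ b, b ≠ a → q b = q' b) : q = q' := by
  classical
  ext b
  by_cases hb : b = a
  · subst hb
    have e := q.tsum_coe.trans q'.tsum_coe.symm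
    rw [ENNReal.tsum_eq_add_tsum_ite b, ENNReal.tsum_eq_add_tsum_ite (f := q') b] at e
    have e2 : (∑' x, if x = b then 0 else q x) = ∑' x, if x = b then 0 else q' x := by
      refine tsum_congr fun x => ?_
      split_ifs with hx
      · rfl
      · exact h x hx
    -- The remaining mass is at most one, so it may be cancelled in `ℝ≥0∞`.
    have fin : (∑' x, if x = b then 0 else q' x) ≠ ⊤ := by
      refine ne_top_of_le_ne_top q'.tsum_coe_ne_top (ENNReal.tsum_le_tsum fun x => ?_)
      split_ifs <;> simp
    rw [e2] at e
    exact (ENNReal.add_left_inj fin).1 e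
  · exact h b hb

theorem collapse_val {S : Type} [DecidableEq S] {xi xj : S} (hne : xi ≠ xj)
    (x : {s : S // s ≠ xj}) : collapse xi xj hne x.val = x := by
  simp [collapse, x.2]

/-- Away from `xi`, each fibre of the collapse map is a single point. -/
theorem map_collapse_apply {S : Type} [DecidableEq S] {xi xj : S} (hne : xi ≠ xj)
    (q : PMF S) (y : {s : S // s ≠ xj}) (hy : y.val ≠ xi) :
    PMF.map (collapse xi xj hne) q y = q y.val := by
  rw [PMF.map_apply, tsum_eq_single y.val]
  · simp [collapse_val]
  · intro b hb
    rw [if_neg]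
    rintro rfl
    by_cases h : b = xj
    · simp [collapse, h] at hy
    · simp [collapse, h] at hb

/-- The lumped transition law from the class of `x` does not depend on the representative `x`. -/
theorem map_collapse_kernel {S : Type} [DecidableEq S] (p : S → PMF S) {xi xj : S}
    (hne : xi ≠ xj) (hp : ∀ y : S, y ≠ xi → y ≠ xj → p xi y = p xj y) (x : S) :
    PMF.map (collapse xi xj hne) (p x) = lumpedKernel p xi xj hne (collapse xi xj hne x) := by
  by_cases h : x = xj
  · subst h
    simp only [lumpedKernel, collapse, dif_pos]
    refine pmf_eq_of_eq_off_point _ _ ⟨xi, hne⟩ fun y hy => ?_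
    have hy' : y.val ≠ xi := fun e => hy (Subtype.ext e)
    have := hp y.val hy' y.2
    exact (map_collapse_apply hne _ y hy').trans
      (this.symm.trans (map_collapse_apply hne _ y hy').symm)
  · simp [lumpedKernel, collapse, h]

/-- The coordinatewise collapse of the original chain is the lumped chain. -/
theorem map_collapse_traj {S : Type} [DecidableEq S] (p : S → PMF S) (μ : PMF S) {xi xj : S}
    (hne : xi ≠ xj) (hp : ∀ y : S, y ≠ xi → y ≠ xj → p xi y = p xj y) (n : ℕ) :
    PMF.map (fun f t => collapse xi xj hne (f t)) (traj p μ n) =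
      traj (lumpedKernel p xi xj hne) (PMF.map (collapse xi xj hne) μ) n := by
  induction n with
  | zero => simp only [traj, PMF.map_comp]; rfl
  | succ n ih =>
    rw [traj, traj, ← ih, PMF.map_bind, PMF.bind_map]
    congr 1
    funext f
    simp only [Function.comp_apply]
    rw [← map_collapse_kernel p hne hp, PMF.map_comp, PMF.map_comp]
    congr 1
    funext y
    exact Fin.comp_snoc (collapse xi xj hne) f y

/-- return-distribution preservation under isotopic lumping: if the two
distinct states `xi`, `xj` are isotopic, then for every horizon `N = n + 1 ≥ 1` and
every discount factor `γ ∈ (0,1)`, the law of the discounted return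
`Φ_N = Σ_{t=1}^{N} γ^{t−1} r(X_t)` of the original chain equals the law of the
discounted return of the lumped chain; in particular the means and variances agree. -/
theorem sat_isotopic_lumping_return_law
    {S : Type} [Fintype S] [Nonempty S] [DecidableEq S]
    (p : S → PMF S) (μ : PMF S) (r : S → ℝ)
    (xi xj : S) (hne : xi ≠ xj)
    (hr : r xi = r xj)
    (hp : ∀ y : S, y ≠ xi → y ≠ xj → p xi y = p xj y)
    (γ : ℝ) (hγ0 : 0 < γ) (hγ1 : γ < 1) :
    ∀ n : ℕ,
      PMF.map (fun f => ∑ t : Fin (n + 1), γ ^ (t : ℕ) * r (f t)) (traj p μ n)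
          = PMF.map (fun f => ∑ t : Fin (n + 1), γ ^ (t : ℕ) * r (f t).val)
              (traj (lumpedKernel p xi xj hne) (PMF.map (collapse xi xj hne) μ) n)
      ∧ pmfMean
            (PMF.map (fun f => ∑ t : Fin (n + 1), γ ^ (t : ℕ) * r (f t)) (traj p μ n))
          = pmfMean
            (PMF.map (fun f => ∑ t : Fin (n + 1), γ ^ (t : ℕ) * r (f t).val)
              (traj (lumpedKernel p xi xj hne) (PMF.map (collapse xi xj hne) μ) n))
      ∧ pmfVar
            (PMF.map (fun f => ∑ t : Fin (n + 1), γ ^ (t : ℕ) * r (f t)) (traj p μ n))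
          = pmfVar
            (PMF.map (fun f => ∑ t : Fin (n + 1), γ ^ (t : ℕ) * r (f t).val)
              (traj (lumpedKernel p xi xj hne) (PMF.map (collapse xi xj hne) μ) n)) := by
  intro n
  have key : PMF.map (fun f => ∑ t : Fin (n + 1), γ ^ (t : ℕ) * r (f t)) (traj p μ n)
      = PMF.map (fun f => ∑ t : Fin (n + 1), γ ^ (t : ℕ) * r (f t).val)
          (traj (lumpedKernel p xi xj hne) (PMF.map (collapse xi xj hne) μ) n) := by
    have hc : ∀ x, r (collapse xi xj hne x).val = r x := by
      intro x
      by_cases h : x = xj <;> simp [collapse, h, hr]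
    rw [← map_collapse_traj p μ hne hp n, PMF.map_comp]
    congr 1
    funext f
    simp [hc]
  exact ⟨key, congrArg pmfMean key, congrArg pmfVar key⟩
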